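/- arXiv:1111.6257 — 4 statements merged into one kernel-verified Lean document; each statement's English description precedes it below -/
import Mathlib

section
/- Let H be a separable real Hilbert space, I ⊆ ℝ an interval, and R > 0. Let B_w denote the closed ball {x ∈ H : ‖x‖ ≤ R} with the weak topology of H. Then the space C(I, B_w) of continuous maps from I to B_w, endowed with the compact-open topology (uniform convergence on compact subintervals), is a Polish space (separable and completely metrizable). -/
/-!
Continuous maps from a second countable locally compact space to a Polish space form a Polish space:
the compact-open topology is that of uniform convergence on the members of a compact exhaustion, a
complete uniformity with a countable basis.

The weak closed ball of a separable Hilbert space is Polish because it is compact and metrizable.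
Compactness is the Banach–Alaoglu theorem, carried over from the bidual by reflexivity.
Metrizability follows because norming functionals of a dense sequence are countably many weakly
continuous functions that separate points.
-/

open Set TopologicalSpace NormedSpace

section Order

variable {α : Type*} [LinearOrder α] [TopologicalSpace α] [OrderClosedTopology α] {s : Set α}

theorem isLocallyClosed_of_isUpperSet (hs : IsUpperSet s) : IsLocallyClosed s := by
  by_cases h : ∃ a, IsLeast s a
  · obtain ⟨a, ha⟩ := h
    have s_eq : s = Ici a := Subset.antisymm ha.2 (hs.Ici_subset ha.1)
    exact s_eq ▸ isLocallyClosed_Ici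
  · have s_eq : s = ⋃ x ∈ s, Ioi x := by
      refine Subset.antisymm (fun x hx ↦ ?_) (iUnion₂_subset fun x hx ↦ hs.Ioi_subset hx)
      obtain ⟨y, hy, hyx⟩ : ∃ y ∈ s, y < x := by
        by_contra! hle
        exact h ⟨x, hx, hle⟩
      exact mem_biUnion hy hyx
    exact s_eq ▸ (isOpen_biUnion fun x _ ↦ isOpen_Ioi).isLocallyClosed

theorem isLocallyClosed_of_isLowerSet (hs : IsLowerSet s) : IsLocallyClosed s :=
  isLocallyClosed_of_isUpperSet (α := αᵒᵈ) hs.toDual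

theorem isLocallyClosed_of_ordConnected (hs : s.OrdConnected) : IsLocallyClosed s := by
  rw [← hs.upperClosure_inter_lowerClosure]
  exact (isLocallyClosed_of_isUpperSet (upperClosure s).upper).inter
    (isLocallyClosed_of_isLowerSet (lowerClosure s).lower)

end Order

theorem polishSpace_continuousMap {X Y : Type*} [TopologicalSpace X] [LocallyCompactSpace X]
    [SecondCountableTopology X] [TopologicalSpace Y] [PolishSpace Y] : PolishSpace C(X, Y) := by
  let := upgradeIsCompletelyMetrizable Y
  infer_instance

section WeakSpace

variable {𝕜 E : Type*} [RCLike 𝕜] [NormedAddCommGroup E] [NormedSpace 𝕜 E]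

variable (𝕜 E) in
theorem exists_seq_strongDual_separating [SeparableSpace E] :
    ∃ f : ℕ → StrongDual 𝕜 E, ∀ x, (∀ n, f n x = 0) → x = 0 := by
  choose f norm_f_le f_apply using fun n ↦ exists_dual_vector'' 𝕜 (denseSeq E n)
  refine ⟨f, fun x hx ↦ ?_⟩
  have norm_denseSeq_le (n : ℕ) : ‖denseSeq E n‖ ≤ ‖denseSeq E n - x‖ :=
    calc ‖denseSeq E n‖ = ‖f n (denseSeq E n - x)‖ := by simp [hx, f_apply]
      _ ≤ ‖denseSeq E n - x‖ := by
        simpa only [one_mul] using (f n).le_of_opNorm_le (norm_f_le n) (denseSeq E n - x)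
  have norm_le_norm_sub_right (y : E) : ‖y‖ ≤ ‖y - x‖ :=
    (denseRange_denseSeq E).induction_on y
      (isClosed_le continuous_norm (by fun_prop)) norm_denseSeq_le
  simpa using norm_le_norm_sub_right x

theorem metrizableSpace_of_isCompact_weakSpace [SeparableSpace E] {K : Set (WeakSpace 𝕜 E)}
    (hK : IsCompact K) : MetrizableSpace K := by
  have : CompactSpace K := isCompact_iff_compactSpace.mp hK
  obtain ⟨f, hf⟩ := exists_seq_strongDual_separating 𝕜 E
  have continuous_apply (n : ℕ) : Continuous fun x : K ↦ f n ((toWeakSpace 𝕜 E).symm x) :=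
    (WeakBilin.eval_continuous (topDualPairing 𝕜 E).flip (f n)).comp continuous_subtype_val
  refine Metric.PiNatEmbed.TopologicalSpace.MetrizableSpace.of_countable_separating
    (fun n (x : K) ↦ f n ((toWeakSpace 𝕜 E).symm x)) continuous_apply fun x y hxy ↦ ?_
  contrapose! hxy
  refine Subtype.ext ((toWeakSpace 𝕜 E).symm.injective (sub_eq_zero.mp (hf _ fun n ↦ ?_)))
  rw [map_sub, hxy, sub_self]

theorem polishSpace_of_isCompact_weakSpace [SeparableSpace E] {K : Set (WeakSpace 𝕜 E)}
    (hK : IsCompact K) : PolishSpace K := by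
  have : CompactSpace K := isCompact_iff_compactSpace.mp hK
  have : MetrizableSpace K := metrizableSpace_of_isCompact_weakSpace hK
  let := metrizableSpaceMetric K
  infer_instance

theorem isCompact_weakSpace_closedBall
    (hE : Function.Surjective (inclusionInDoubleDual 𝕜 E)) (R : ℝ) :
    IsCompact {x : WeakSpace 𝕜 E | ‖(toWeakSpace 𝕜 E).symm x‖ ≤ R} := by
  have ball_eq : {x : WeakSpace 𝕜 E | ‖(toWeakSpace 𝕜 E).symm x‖ ≤ R} =
      inclusionInDoubleDualWeak 𝕜 E ⁻¹'
        (WeakDual.toStrongDual ⁻¹' Metric.closedBall 0 R) := by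
    ext x
    have norm_eq : ‖WeakDual.toStrongDual (inclusionInDoubleDualWeak 𝕜 E x)‖ =
        ‖(toWeakSpace 𝕜 E).symm x‖ := (inclusionInDoubleDualLi 𝕜).norm_map _
    rw [mem_ofPred, ← norm_eq]
    exact (mem_closedBall_zero_iff (E := StrongDual 𝕜 (StrongDual 𝕜 E))).symm
  have surjective_weak : Function.Surjective (inclusionInDoubleDualWeak 𝕜 E) := hE
  rw [ball_eq]
  exact (isEmbedding_inclusionInDoubleDualWeak 𝕜 E).isCompact_preimage'
    (WeakDual.isCompact_closedBall 0 R) (surjective_weak.range_eq ▸ subset_univ _)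

end WeakSpace

theorem surjective_inclusionInDoubleDual_of_innerProductSpace {𝕜 H : Type*} [RCLike 𝕜]
    [NormedAddCommGroup H] [InnerProductSpace 𝕜 H] [CompleteSpace H] :
    Function.Surjective (inclusionInDoubleDual 𝕜 H) := by
  intro F
  let toDual := InnerProductSpace.toDual 𝕜 H
  let G : StrongDual 𝕜 H :=
    (starL 𝕜 : 𝕜 ≃L⋆[𝕜] 𝕜).toContinuousLinearMap.comp
      (F.comp toDual.toContinuousLinearEquiv.toContinuousLinearMap)
  refine ⟨toDual.symm G, ContinuousLinearMap.ext fun φ ↦ ?_⟩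
  obtain ⟨y, rfl⟩ := toDual.surjective φ
  calc toDual y (toDual.symm G) = star (inner 𝕜 (toDual.symm G) y) := (inner_conj_symm _ _).symm
    _ = star (G y) := by rw [InnerProductSpace.toDual_symm_apply]
    _ = F (toDual y) := star_star _

theorem polishSpace_continuousMap_weak_ball_general
    {𝕜 E X : Type*} [RCLike 𝕜] [NormedAddCommGroup E] [NormedSpace 𝕜 E] [SeparableSpace E]
    (hE : Function.Surjective (inclusionInDoubleDual 𝕜 E))
    [TopologicalSpace X] [LocallyCompactSpace X] [SecondCountableTopology X] (R : ℝ) :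
    PolishSpace C(X, {x : WeakSpace 𝕜 E // ‖(toWeakSpace 𝕜 E).symm x‖ ≤ R}) := by
  have : PolishSpace {x : WeakSpace 𝕜 E // ‖(toWeakSpace 𝕜 E).symm x‖ ≤ R} :=
    polishSpace_of_isCompact_weakSpace (isCompact_weakSpace_closedBall hE R)
  exact polishSpace_continuousMap

/-- Let `H` be a separable real Hilbert space, `I ⊆ ℝ` an interval, `R > 0`,
and let `B_w` be the closed ball of radius `R` in `H` with the weak topology.  Then
`C(I, B_w)` with the compact-open topology is a Polish space. -/
theorem polishSpace_continuousMap_weak_ball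
    {H : Type*} [NormedAddCommGroup H] [InnerProductSpace ℝ H] [CompleteSpace H]
    [TopologicalSpace.SeparableSpace H]
    (I : Set ℝ) (hI : I.OrdConnected) (R : ℝ) (hR : 0 < R) :
    PolishSpace C(I, {x : WeakSpace ℝ H // ‖(toWeakSpace ℝ H).symm x‖ ≤ R}) := by
  have : LocallyCompactSpace I := (isLocallyClosed_of_ordConnected hI).locallyCompactSpace
  exact polishSpace_continuousMap_weak_ball_general
    surjective_inclusionInDoubleDual_of_innerProductSpace R
end

section
/- Let H be a separable real Hilbert space and I ⊆ ℝ an interval. Then the space C(I, H_w) of weakly continuous functions u : I → H, endowed with the topology of uniform weak convergence on compact subintervals (the compact-open topology), is a separable Hausdorff topological space. -/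
/-!
If `f` maps a compact set `K` into an open set `U`, then it maps some finite union `S ⊇ K` of
basic open sets into some finite union `T ⊆ U` of basic open sets. So for second countable `X` and
`Y`, the countably many conditions `f S ⊆ T` generate a topology on `C(X, Y)` finer than the
compact-open one, and `C(X, Y)` is separable. The weak topology of `E` need not be second
countable, but the maps continuous into the original topology are dense among the weakly
continuous ones: for finitely many functionals `φ`, some finite-rank operator `P`, continuous from
the weak to the original topology, satisfies `φ ∘ P = φ` for each of them, and `P ∘ u` converges
to `u` as the set of functionals grows.
-/

open Filter Set TopologicalSpace Topology

section CompactOpen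

theorem separableSpace_of_generateFrom_le {Z : Type*} [t : TopologicalSpace Z] {G : Set (Set Z)}
    (hG : G.Countable) (hle : generateFrom G ≤ t) : SeparableSpace Z := by
  have : @SecondCountableTopology Z (generateFrom G) :=
    @SecondCountableTopology.mk Z (_) ⟨G, hG, rfl⟩
  have : @SeparableSpace Z (generateFrom G) :=
    @SecondCountableTopology.to_separableSpace Z (_) this
  exact @DenseRange.separableSpace Z Z (_) this t id (@denseRange_id Z (_))
    (continuous_id_of_le hle)

variable {X Y : Type*} [TopologicalSpace X] [TopologicalSpace Y]

theorem exists_finite_sUnion_between_of_isTopologicalBasis {B : Set (Set X)}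
    (hB : IsTopologicalBasis B) {K U : Set X} (hK : IsCompact K) (hU : IsOpen U) (hKU : K ⊆ U) :
    ∃ s, (s.Finite ∧ s ⊆ B) ∧ K ⊆ ⋃₀ s ∧ ⋃₀ s ⊆ U := by
  rw [hB.open_eq_sUnion' hU, sUnion_eq_biUnion] at hKU
  obtain ⟨s, hs, hfin, hKs⟩ := hK.elim_finite_subcover_image (fun V hV ↦ hB.isOpen hV.1) hKU
  exact ⟨s, ⟨hfin, fun V hV ↦ (hs hV).1⟩, by rwa [sUnion_eq_biUnion],
    sUnion_subset fun V hV ↦ (hs hV).2⟩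

theorem exists_mapsTo_finite_sUnion_of_isTopologicalBasis {B : Set (Set X)} {C : Set (Set Y)}
    (hB : IsTopologicalBasis B) (hC : IsTopologicalBasis C) (f : C(X, Y)) {K : Set X} {U : Set Y}
    (hK : IsCompact K) (hU : IsOpen U) (hf : MapsTo f K U) :
    ∃ s t, (s.Finite ∧ s ⊆ B) ∧ (t.Finite ∧ t ⊆ C) ∧
      K ⊆ ⋃₀ s ∧ MapsTo f (⋃₀ s) (⋃₀ t) ∧ ⋃₀ t ⊆ U := by
  obtain ⟨t, ht, hft, htU⟩ := exists_finite_sUnion_between_of_isTopologicalBasis hC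
    (hK.image f.continuous) hU hf.image_subset
  have ht_open : IsOpen (⋃₀ t) := isOpen_sUnion fun V hV ↦ hC.isOpen (ht.2 hV)
  obtain ⟨s, hs, hKs, hst⟩ := exists_finite_sUnion_between_of_isTopologicalBasis hB hK
    (ht_open.preimage f.continuous) (image_subset_iff.1 hft)
  exact ⟨s, t, hs, ht, hKs, hst, htU⟩

theorem generateFrom_mapsTo_sUnion_le_compactOpen {B : Set (Set X)} {C : Set (Set Y)}
    (hB : IsTopologicalBasis B) (hC : IsTopologicalBasis C) :
    generateFrom (image2 (fun s t ↦ {f : C(X, Y) | MapsTo f (⋃₀ s) (⋃₀ t)})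
      {s | s.Finite ∧ s ⊆ B} {t | t.Finite ∧ t ⊆ C}) ≤ ContinuousMap.compactOpen := by
  refine le_generateFrom ?_
  rintro _ ⟨K, hK, U, hU, rfl⟩
  rw [@isOpen_iff_forall_mem_open]
  intro f hf
  obtain ⟨s, t, hs, ht, hKs, hst, htU⟩ :=
    exists_mapsTo_finite_sUnion_of_isTopologicalBasis hB hC f hK hU hf
  exact ⟨{g | MapsTo g (⋃₀ s) (⋃₀ t)}, fun g hg ↦ hg.mono hKs htU,
    isOpen_generateFrom_of_mem (mem_image2_of_mem hs ht), hst⟩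

theorem separableSpace_continuousMap [SecondCountableTopology X] [SecondCountableTopology Y] :
    SeparableSpace C(X, Y) :=
  separableSpace_of_generateFrom_le
    (.image2 (countable_ofPred_finite_subset (countable_countableBasis X))
      (countable_ofPred_finite_subset (countable_countableBasis Y)) _)
    (generateFrom_mapsTo_sUnion_le_compactOpen
      (isBasis_countableBasis X) (isBasis_countableBasis Y))

theorem isInducing_continuousMap_pi {ι : Type*} {Z : ι → Type*} [∀ i, UniformSpace (Z i)] :
    IsInducing fun (f : C(X, ∀ i, Z i)) i ↦ (ContinuousMap.eval i).comp f := by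
  have toUniformOnFun_continuous :
      Continuous fun (g : ∀ i, C(X, Z i)) i ↦ (g i).toUniformOnFunIsCompact :=
    .piMap fun i ↦
      ContinuousMap.isUniformEmbedding_toUniformOnFunIsCompact.uniformContinuous.continuous
  have piComm_isInducing :=
    (UniformOnFun.uniformEquivPiComm {K : Set X | IsCompact K} Z).isUniformInducing.isInducing
  exact .of_comp (by fun_prop) toUniformOnFun_continuous <| piComm_isInducing.comp
    ContinuousMap.isUniformEmbedding_toUniformOnFunIsCompact.isInducing

end CompactOpen

theorem exists_linearMap_comp_comp_eq {K V W : Type*} [DivisionRing K] [AddCommGroup V]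
    [Module K V] [AddCommGroup W] [Module K W] (f : V →ₗ[K] W) :
    ∃ g : W →ₗ[K] V, f ∘ₗ g ∘ₗ f = f := by
  obtain ⟨s, hs⟩ := f.rangeRestrict.exists_rightInverse_of_surjective f.range_rangeRestrict
  obtain ⟨g, hg⟩ := s.exists_extend
  refine ⟨g, LinearMap.ext fun v ↦ ?_⟩
  calc f (g (f v)) = f (s (f.rangeRestrict v)) := congr(f ($hg (f.rangeRestrict v)))
    _ = f v := congr(($hs (f.rangeRestrict v)).1)

section WeakSpace

section CommRing

variable {R M X : Type*} [CommRing R] [TopologicalSpace R] [IsTopologicalRing R] [AddCommGroup M]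
  [Module R M] [TopologicalSpace M] [TopologicalSpace X]

/-- A continuous linear functional on `M`, as a continuous map on `M` with its weak topology. -/
noncomputable def weakSpaceFunctional (φ : StrongDual R M) : C(WeakSpace R M, R) where
  toFun x := φ ((toWeakSpace R M).symm x)
  continuous_toFun := WeakBilin.eval_continuous (topDualPairing R M).flip φ

theorem isInducing_weakSpaceFunctional_comp :
    IsInducing fun (u : C(X, WeakSpace R M)) (φ : StrongDual R M) ↦
      (weakSpaceFunctional φ).comp u := by
  let := IsTopologicalAddGroup.rightUniformSpace R
  let evalDual : C(WeakSpace R M, StrongDual R M → R) := .pi weakSpaceFunctional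
  exact isInducing_continuousMap_pi.comp (ContinuousMap.isInducing_postcomp evalDual ⟨rfl⟩)

end CommRing

variable {𝕜 E X : Type*} [Field 𝕜] [TopologicalSpace 𝕜] [IsTopologicalRing 𝕜] [AddCommGroup E]
  [Module 𝕜 E] [TopologicalSpace E] [ContinuousAdd E] [ContinuousSMul 𝕜 E] [TopologicalSpace X]

theorem exists_continuousLinearMap_weakSpace_apply_eq (F : Finset (StrongDual 𝕜 E)) :
    ∃ P : WeakSpace 𝕜 E →L[𝕜] E, ∀ φ ∈ F, ∀ x, φ (P x) = weakSpaceFunctional φ x := by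
  let evalF : E →ₗ[𝕜] F → 𝕜 := LinearMap.pi fun φ ↦ φ.1.toLinearMap
  obtain ⟨g, hg⟩ := exists_linearMap_comp_comp_eq evalF
  refine ⟨⟨g ∘ₗ evalF ∘ₗ (toWeakSpace 𝕜 E).symm, ?_⟩, fun φ hφ x ↦ congr($hg x ⟨φ, hφ⟩)⟩
  exact g.continuous_on_pi.comp <| continuous_pi fun φ ↦ (weakSpaceFunctional φ.1).continuous

theorem denseRange_toWeakSpaceCLM_comp :
    DenseRange fun v : C(X, E) ↦ (toWeakSpaceCLM 𝕜 E : C(E, WeakSpace 𝕜 E)).comp v := by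
  intro u
  choose P hP using exists_continuousLinearMap_weakSpace_apply_eq (𝕜 := 𝕜) (E := E)
  let approx (F : Finset (StrongDual 𝕜 E)) : C(X, E) := (P F : C(WeakSpace 𝕜 E, E)).comp u
  refine mem_closure_of_tendsto (b := atTop) ?_ (Eventually.of_forall fun F ↦ ⟨approx F, rfl⟩)
  rw [isInducing_weakSpaceFunctional_comp.tendsto_nhds_iff, tendsto_pi_nhds]
  intro φ
  refine tendsto_nhds_of_eventually_eq ?_
  filter_upwards [eventually_ge_atTop {φ}] with F hF
  ext x
  exact hP F φ (Finset.singleton_subset_iff.1 hF) (u x)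

theorem separable_t2_continuousMap_weak_general [T2Space 𝕜] [SecondCountableTopology E]
    [SeparatingDual 𝕜 E] [SecondCountableTopology X] :
    SeparableSpace C(X, WeakSpace 𝕜 E) ∧ T2Space C(X, WeakSpace 𝕜 E) := by
  have : SeparableSpace C(X, E) := separableSpace_continuousMap
  exact ⟨denseRange_toWeakSpaceCLM_comp.separableSpace (ContinuousMap.continuous_postcomp _),
    inferInstance⟩

end WeakSpace

/-- Let `H` be a separable real Hilbert space and `I ⊆ ℝ` an interval.
Then `C(I, H_w)`, the space of weakly continuous functions `I → H` with the topology of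
uniform weak convergence on compact subintervals (compact-open topology), is a separable
Hausdorff topological space. -/
theorem separable_t2_continuousMap_weak
    {H : Type*} [NormedAddCommGroup H] [InnerProductSpace ℝ H] [CompleteSpace H]
    [TopologicalSpace.SeparableSpace H]
    (I : Set ℝ) (hI : I.OrdConnected) :
    TopologicalSpace.SeparableSpace C(I, WeakSpace ℝ H) ∧ T2Space C(I, WeakSpace ℝ H) := by
  have : SecondCountableTopology H := UniformSpace.secondCountable_of_separable H
  exact separable_t2_continuousMap_weak_general
end

section
/- Let H be a separable real Hilbert space and let I ⊆ ℝ be an interval that is closed and bounded on the left, with left endpoint t₀ ∈ I. Then for every u ∈ C(I, H_w), liminf_{t → t₀⁺} (t − t₀)⁻¹ ∫_{t₀}^{t} (‖u(s)‖² − ‖u(t₀)‖²) ds ≥ 0. -/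
open scoped Classical
open MeasureTheory Filter

/-!
Closed balls are weakly closed, so `s ↦ ‖u s‖²` is lower semicontinuous, hence Borel measurable;
by the uniform boundedness principle on the dual it is bounded on compact subintervals. It is
therefore integrable there, and by lower semicontinuity at `t₀` the liminf of its right averages
at `t₀` is at least its value at `t₀`; the upper bound keeps this real liminf from being junk.
-/

section Average

open Set Topology

lemma eventually_intervalIntegrable_nhdsGT {F : Type*} [NormedAddCommGroup F] {μ : Measure ℝ}
    {f : ℝ → F} {a : ℝ} (hf : IntegrableAtFilter f (𝓝[>] a) μ) :
    ∀ᶠ t in 𝓝[>] a, IntervalIntegrable f μ a t := by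
  obtain ⟨s, hs, hfs⟩ := hf
  obtain ⟨b, hab, hbs⟩ := mem_nhdsGT_iff_exists_Ioc_subset.1 hs
  filter_upwards [Ioc_mem_nhdsGT hab] with t ht
  rw [intervalIntegrable_iff_integrableOn_Ioc_of_le ht.1.le]
  exact hfs.mono_set ((Ioc_subset_Ioc_right ht.2).trans hbs)

variable {f : ℝ → ℝ} {a c : ℝ}

lemma eventually_le_average_nhdsGT (hf : IntegrableAtFilter f (𝓝[>] a))
    (hc : ∀ᶠ s in 𝓝[>] a, c ≤ f s) :
    ∀ᶠ t in 𝓝[>] a, c ≤ (t - a)⁻¹ * ∫ s in a..t, f s := by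
  obtain ⟨b, hab, hb⟩ := mem_nhdsGT_iff_exists_Ioc_subset.1 hc
  filter_upwards [eventually_intervalIntegrable_nhdsGT hf, Ioc_mem_nhdsGT hab] with t hft ht
  have hle : ∫ _ in a..t, c ≤ ∫ s in a..t, f s :=
    intervalIntegral.integral_mono_on_of_le_Ioo ht.1.le intervalIntegrable_const hft
      fun s hs => hb ⟨hs.1, hs.2.le.trans ht.2⟩
  rw [intervalIntegral.integral_const, smul_eq_mul] at hle
  rwa [le_inv_mul_iff₀ (sub_pos.2 ht.1)]

lemma eventually_average_le_nhdsGT (hf : IntegrableAtFilter f (𝓝[>] a))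
    (hc : ∀ᶠ s in 𝓝[>] a, f s ≤ c) :
    ∀ᶠ t in 𝓝[>] a, (t - a)⁻¹ * ∫ s in a..t, f s ≤ c := by
  have hneg := eventually_le_average_nhdsGT hf.neg (hc.mono fun _ => neg_le_neg)
  simpa only [Pi.neg_apply, intervalIntegral.integral_neg, mul_neg, neg_le_neg_iff] using hneg

theorem le_liminf_average_nhdsGT (hlsc : LowerSemicontinuousWithinAt f (Ioi a) a)
    (hint : IntegrableAtFilter f (𝓝[>] a)) (hbdd : IsBoundedUnder (· ≤ ·) (𝓝[>] a) f) :
    f a ≤ liminf (fun t => (t - a)⁻¹ * ∫ s in a..t, f s) (𝓝[>] a) := by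
  have hlower : ∀ y < f a, ∀ᶠ t in 𝓝[>] a, y ≤ (t - a)⁻¹ * ∫ s in a..t, f s := fun y hy =>
    eventually_le_average_nhdsGT hint ((hlsc y hy).mono fun _ => le_of_lt)
  have hupper : IsBoundedUnder (· ≤ ·) (𝓝[>] a) fun t => (t - a)⁻¹ * ∫ s in a..t, f s :=
    hbdd.imp fun _ hC => eventually_average_le_nhdsGT hint hC
  exact le_of_forall_lt_imp_le_of_dense fun y hy =>
    le_liminf_of_le hupper.isCoboundedUnder_ge (hlower y hy)

theorem liminf_average_sub_nonneg_nhdsGT (hlsc : LowerSemicontinuousWithinAt f (Ioi a) a)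
    (hint : IntegrableAtFilter f (𝓝[>] a)) (hbdd : IsBoundedUnder (· ≤ ·) (𝓝[>] a) f) :
    0 ≤ liminf (fun t => (t - a)⁻¹ * ∫ s in a..t, (f s - f a)) (𝓝[>] a) := by
  have hmono : Monotone fun x => x - f a := fun _ _ hxy => sub_le_sub_right hxy _
  have hcont : Continuous fun x => x - f a := by fun_prop
  have hconst : IntegrableAtFilter (fun _ => f a) (𝓝[>] a) :=
    (locallyIntegrable_const (f a) a).filter_mono nhdsWithin_le_nhds
  have hle := le_liminf_average_nhdsGT
    (hcont.continuousAt.comp_lowerSemicontinuousWithinAt hlsc hmono)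
    (hint.sub hconst) (hbdd.comp fun _ _ hxy => hmono hxy)
  simpa only [Function.comp_apply, sub_self] using hle

end Average

section WeakSpace

open Set Topology

variable {𝕜 E X : Type*} [RCLike 𝕜] [SeminormedAddCommGroup E] [NormedSpace 𝕜 E]
  [TopologicalSpace X]

lemma continuous_dual_apply_toWeakSpace_symm (φ : StrongDual 𝕜 E) :
    Continuous fun x : WeakSpace 𝕜 E => φ ((toWeakSpace 𝕜 E).symm x) :=
  WeakBilin.eval_continuous (topDualPairing 𝕜 E).flip φ

theorem lowerSemicontinuous_nnnorm_toWeakSpace_symm :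
    LowerSemicontinuous fun x : WeakSpace 𝕜 E => ‖(toWeakSpace 𝕜 E).symm x‖₊ := by
  refine lowerSemicontinuous_iff_isClosed_preimage.2 fun r => ?_
  have hball : (fun x : WeakSpace 𝕜 E => ‖(toWeakSpace 𝕜 E).symm x‖₊) ⁻¹' Iic r =
      ⋂ φ : StrongDual 𝕜 E, {x | ‖φ ((toWeakSpace 𝕜 E).symm x)‖ ≤ r * ‖φ‖} := by
    ext x
    rw [mem_iInter]
    refine ⟨fun hx φ => ?_, fun hx => NormedSpace.norm_le_dual_bound 𝕜 _ r.2 hx⟩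
    exact (φ.le_of_opNorm_le_of_le le_rfl hx).trans_eq (mul_comm _ _)
  rw [hball]
  exact isClosed_iInter fun φ =>
    isClosed_le (continuous_dual_apply_toWeakSpace_symm φ).norm continuous_const

theorem lowerSemicontinuous_norm_sq_toWeakSpace_symm :
    LowerSemicontinuous fun x : WeakSpace 𝕜 E => ‖(toWeakSpace 𝕜 E).symm x‖ ^ 2 := by
  have hmono : Monotone fun r : NNReal => (r : ℝ) ^ 2 := fun r _ hrs =>
    pow_le_pow_left₀ r.coe_nonneg (NNReal.coe_le_coe.2 hrs) 2
  exact (by fun_prop : Continuous fun r : NNReal => (r : ℝ) ^ 2).comp_lowerSemicontinuous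
    lowerSemicontinuous_nnnorm_toWeakSpace_symm hmono

theorem exists_norm_toWeakSpace_symm_le_of_isCompact {K : Set (WeakSpace 𝕜 E)}
    (hK : IsCompact K) : ∃ C, ∀ x ∈ K, ‖(toWeakSpace 𝕜 E).symm x‖ ≤ C := by
  let ev (x : K) : StrongDual 𝕜 E →L[𝕜] 𝕜 :=
    NormedSpace.inclusionInDoubleDualLi 𝕜 ((toWeakSpace 𝕜 E).symm x)
  have hpointwise : ∀ φ, ∃ C, ∀ x, ‖ev x φ‖ ≤ C := fun φ =>
    (hK.exists_bound_of_continuousOn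
      (continuous_dual_apply_toWeakSpace_symm φ).continuousOn).imp fun _ hC x => hC x x.2
  obtain ⟨C, hC⟩ := banach_steinhaus hpointwise
  refine ⟨C, fun x hx => ?_⟩
  simpa only [ev, LinearIsometry.norm_map] using hC ⟨x, hx⟩

lemma isBoundedUnder_norm_sq_toWeakSpace_symm_nhds [WeaklyLocallyCompactSpace X]
    {v : X → WeakSpace 𝕜 E} (hv : Continuous v) (x : X) :
    IsBoundedUnder (· ≤ ·) (𝓝 x) fun y => ‖(toWeakSpace 𝕜 E).symm (v y)‖ ^ 2 := by
  obtain ⟨K, hK, hKx⟩ := exists_compact_mem_nhds x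
  obtain ⟨C, hC⟩ := exists_norm_toWeakSpace_symm_le_of_isCompact (hK.image hv)
  refine isBoundedUnder_of_eventually_le (a := C ^ 2) ?_
  filter_upwards [hKx] with y hy
  gcongr
  exact hC _ (mem_image_of_mem v hy)

theorem locallyIntegrable_norm_sq_toWeakSpace_symm [WeaklyLocallyCompactSpace X]
    [MeasurableSpace X] [OpensMeasurableSpace X] {μ : Measure X} [IsLocallyFiniteMeasure μ]
    {v : X → WeakSpace 𝕜 E} (hv : Continuous v) :
    LocallyIntegrable (fun y => ‖(toWeakSpace 𝕜 E).symm (v y)‖ ^ 2) μ := by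
  intro x
  have hmeas : Measurable fun y => ‖(toWeakSpace 𝕜 E).symm (v y)‖ ^ 2 :=
    (lowerSemicontinuous_norm_sq_toWeakSpace_symm.comp hv).measurable
  refine (μ.finiteAt_nhds x).integrableAtFilter
    hmeas.stronglyMeasurable.stronglyMeasurableAtFilter ?_
  simpa only [Function.comp_def, norm_pow, norm_norm] using
    isBoundedUnder_norm_sq_toWeakSpace_symm_nhds hv x

theorem liminf_average_norm_sq_sub_nonneg_nhdsGT {v : ℝ → WeakSpace 𝕜 E} (hv : Continuous v)
    (a : ℝ) :
    0 ≤ liminf (fun t => (t - a)⁻¹ * ∫ s in a..t,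
      (‖(toWeakSpace 𝕜 E).symm (v s)‖ ^ 2 - ‖(toWeakSpace 𝕜 E).symm (v a)‖ ^ 2)) (𝓝[>] a) :=
  liminf_average_sub_nonneg_nhdsGT
    ((lowerSemicontinuous_norm_sq_toWeakSpace_symm.comp hv).lowerSemicontinuousWithinAt _ a)
    ((locallyIntegrable_norm_sq_toWeakSpace_symm hv a).filter_mono nhdsWithin_le_nhds)
    ((isBoundedUnder_norm_sq_toWeakSpace_symm_nhds hv a).mono nhdsWithin_le_nhds)

theorem psi_liminf_nonneg_general (I : Set ℝ) (hI : I.OrdConnected) (t₀ : ℝ) (ht₀ : t₀ ∈ I)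
    (u : C(I, WeakSpace 𝕜 E)) :
    0 ≤ liminf (fun t : ℝ =>
        (t - t₀)⁻¹ *
          ∫ s in t₀..t,
            (if h : s ∈ I then
                ‖(toWeakSpace 𝕜 E).symm (u ⟨s, h⟩)‖ ^ 2 -
                  ‖(toWeakSpace 𝕜 E).symm (u ⟨t₀, ht₀⟩)‖ ^ 2
              else 0))
        (𝓝[I ∩ Ioi t₀] t₀) := by
  obtain hempty | ⟨b, hbI, hb : t₀ < b⟩ := (I ∩ Ioi t₀).eq_empty_or_nonempty
  · -- Along the trivial filter the real `liminf` is `sSup univ = 0`.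
    simp [hempty, liminf_eq]
  have hIcc : Icc t₀ b ⊆ I := hI.out ht₀ hbI
  let v : ℝ → WeakSpace 𝕜 E := IccExtend hb.le (u ∘ inclusion hIcc)
  have hv : Continuous v := (u.continuous.comp (continuous_inclusion hIcc)).Icc_extend'
  have hvu (s : ℝ) (hs : s ∈ Icc t₀ b) : v s = u ⟨s, hIcc hs⟩ := IccExtend_of_mem _ _ hs
  have hfilter : 𝓝[I ∩ Ioi t₀] t₀ = 𝓝[>] t₀ :=
    nhdsWithin_inter_of_mem (mem_of_superset (Icc_mem_nhdsGT hb) hIcc)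
  rw [hfilter]
  refine (liminf_average_norm_sq_sub_nonneg_nhdsGT hv t₀).trans_eq (liminf_congr ?_)
  filter_upwards [Ioc_mem_nhdsGT hb] with t ht
  congr 1
  refine intervalIntegral.integral_congr fun s hs => ?_
  rw [uIcc_of_le ht.1.le] at hs
  have hsb : s ∈ Icc t₀ b := Icc_subset_Icc_right ht.2 hs
  simp only [dif_pos (hIcc hsb), hvu s hsb, hvu t₀ (left_mem_Icc.2 hb.le)]

end WeakSpace

/-- Let `H` be a separable real Hilbert space and `I ⊆ ℝ` an interval which
is closed and bounded on the left, with left endpoint `t₀ ∈ I`.  Then for every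
`u ∈ C(I, H_w)`, `liminf_{t → t₀⁺} (t - t₀)⁻¹ ∫_{t₀}^{t} (‖u s‖² - ‖u t₀‖²) ds ≥ 0`. -/
theorem psi_liminf_nonneg
    {H : Type*} [NormedAddCommGroup H] [InnerProductSpace ℝ H] [CompleteSpace H]
    [TopologicalSpace.SeparableSpace H]
    (I : Set ℝ) (hI : I.OrdConnected)
    (t₀ : ℝ) (ht₀ : t₀ ∈ I) (hleft : ∀ t ∈ I, t₀ ≤ t)
    (u : C(I, WeakSpace ℝ H)) :
    0 ≤ Filter.liminf (fun t : ℝ =>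
        (t - t₀)⁻¹ *
          ∫ s in t₀..t,
            (if h : s ∈ I then
                ‖(toWeakSpace ℝ H).symm (u ⟨s, h⟩)‖ ^ 2 -
                  ‖(toWeakSpace ℝ H).symm (u ⟨t₀, ht₀⟩)‖ ^ 2
              else 0))
        (nhdsWithin t₀ (I ∩ Set.Ioi t₀)) :=
  psi_liminf_nonneg_general I hI t₀ ht₀ u
end

section
/- Let H be a separable real Hilbert space, I ⊆ ℝ an interval, and J ⊆ I a subinterval that is closed in I (in the subspace topology of I). Then the restriction map Π_J : C(I, H_w) → C(J, H_w), defined by (Π_J u)(t) = u(t) for t ∈ J, is continuous, surjective, and open (it maps open sets of C(I, H_w) to open sets of C(J, H_w)). -/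
/-!
A nonempty order-connected closed set `J` is a retract: its bounds on either side and `J` itself
form a closed cover, and each side can be collapsed to a point, which has to be the endpoint of `J`
on that side when `J` contains one. Precomposition with a retraction is a continuous right inverse
of the restriction homomorphism, which is therefore a quotient map; a quotient map which is a
homomorphism of topological groups is open.
-/

open Set

section Bounds

variable {α : Type*} [Preorder α] [TopologicalSpace α]

theorem isClosed_upperBounds [ClosedIciTopology α] (s : Set α) : IsClosed (upperBounds s) := by
  have h : upperBounds s = ⋂ a ∈ s, Ici a := by
    ext x
    simp only [mem_upperBounds, mem_iInter₂, mem_Ici]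
  exact h ▸ isClosed_biInter fun _ _ => isClosed_Ici

theorem isClosed_lowerBounds [ClosedIicTopology α] (s : Set α) : IsClosed (lowerBounds s) :=
  isClosed_upperBounds (α := αᵒᵈ) s

end Bounds

theorem exists_coe_forall_mem_eq {α : Type*} {s t : Set α} (hs : s.Subsingleton) (hst : s ⊆ t)
    (ht : t.Nonempty) : ∃ p : t, ∀ x ∈ s, x = p := by
  rcases s.eq_empty_or_nonempty with rfl | ⟨a, ha⟩
  · exact ⟨⟨_, ht.some_mem⟩, by simp⟩
  · exact ⟨⟨a, hst ha⟩, fun x hx => hs hx ha⟩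

theorem union_upperBounds_union_lowerBounds_eq_univ {α : Type*} [LinearOrder α] {s : Set α}
    (hs : s.OrdConnected) : s ∪ (upperBounds s ∪ lowerBounds s) = univ := by
  refine eq_univ_of_forall fun x => ?_
  by_contra hx
  obtain ⟨hxs, hxU, hxL⟩ : x ∉ s ∧ x ∉ upperBounds s ∧ x ∉ lowerBounds s := by
    simpa only [mem_union, not_or] using hx
  obtain ⟨b, hb, hxb⟩ : ∃ b ∈ s, x < b := by simpa [mem_upperBounds] using hxU
  obtain ⟨a, ha, hax⟩ : ∃ a ∈ s, a < x := by simpa [mem_lowerBounds] using hxL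
  exact hxs (hs.out ha hb ⟨hax.le, hxb.le⟩)

theorem upperBounds_inter_lowerBounds_subset {α : Type*} [PartialOrder α] {s : Set α}
    (hs : s.Nonempty) : upperBounds s ∩ lowerBounds s ⊆ s := by
  rintro x ⟨hxU, hxL⟩
  obtain ⟨a, ha⟩ := hs
  exact (hxU ha).antisymm (hxL ha) ▸ ha

theorem exists_retraction_of_ordConnected_of_isClosed {X : Type*} [LinearOrder X]
    [TopologicalSpace X] [OrderClosedTopology X] {J : Set X} (hJ : J.OrdConnected)
    (hclosed : IsClosed J) (hne : J.Nonempty) :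
    ∃ r : C(X, J), Function.LeftInverse r Subtype.val := by
  classical
  obtain ⟨p, hp⟩ := exists_coe_forall_mem_eq (s := {x | IsGreatest J x})
    (fun _ hx _ hy => hx.unique hy) (fun _ hx => hx.1) hne
  obtain ⟨q, hq⟩ := exists_coe_forall_mem_eq (s := {x | IsLeast J x})
    (fun _ hx _ hy => hx.unique hy) (fun _ hx => hx.1) hne
  let r (x : X) : J := if hx : x ∈ J then ⟨x, hx⟩ else if x ∈ upperBounds J then p else q
  have hr (x : J) : r x = x := dif_pos x.2
  have hrJ : ContinuousOn r J := by
    rw [continuousOn_iff_continuous_domRestrict, show J.domRestrict r = id from funext hr]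
    exact continuous_id
  have hrU : EqOn r (fun _ => p) (upperBounds J) := fun x hxU => by
    by_cases hx : x ∈ J
    · exact (hr ⟨x, hx⟩).trans (Subtype.ext (hp x ⟨hx, hxU⟩))
    · simp only [r, dif_neg hx, if_pos hxU]
  have hrL : EqOn r (fun _ => q) (lowerBounds J) := fun x hxL => by
    by_cases hx : x ∈ J
    · exact (hr ⟨x, hx⟩).trans (Subtype.ext (hq x ⟨hx, hxL⟩))
    · have hxU : x ∉ upperBounds J := fun hxU =>
        hx (upperBounds_inter_lowerBounds_subset hne ⟨hxU, hxL⟩)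
      simp only [r, dif_neg hx, if_neg hxU]
  have hU := isClosed_upperBounds J
  have hL := isClosed_lowerBounds J
  have hrUL : ContinuousOn r (upperBounds J ∪ lowerBounds J) :=
    (continuousOn_const.congr hrU).union_of_isClosed (continuousOn_const.congr hrL) hU hL
  have hrX : Continuous r := by
    rw [← continuousOn_univ, ← union_upperBounds_union_lowerBounds_eq_univ hJ]
    exact hrJ.union_of_isClosed hrUL hclosed (hU.union hL)
  exact ⟨⟨r, hrX⟩, hr⟩

section Precomposition

variable {X Y E : Type*} [TopologicalSpace X] [TopologicalSpace Y] [TopologicalSpace E]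

theorem isOpenQuotientMap_precomp_of_leftInverse [AddCommGroup E] [IsTopologicalAddGroup E]
    {f : C(Y, X)} {r : C(X, Y)} (h : Function.LeftInverse r f) :
    IsOpenQuotientMap (fun u : C(X, E) => u.comp f) :=
  have hsection : Function.LeftInverse (fun u : C(X, E) => u.comp f) (fun v => v.comp r) :=
    fun v => ContinuousMap.ext fun y => congrArg v (h y)
  AddMonoidHom.isOpenQuotientMap_of_isQuotientMap (φ := ContinuousMap.compAddMonoidHom' (γ := E) f)
    (.of_inverse r.continuous_precomp f.continuous_precomp hsection)

theorem isOpenQuotientMap_precomp_of_isEmpty [Nonempty E] [IsEmpty Y] (f : C(Y, X)) :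
    IsOpenQuotientMap (fun u : C(X, E) => u.comp f) where
  surjective v := ⟨.const X (Classical.arbitrary E), Subsingleton.elim _ v⟩
  continuous := f.continuous_precomp
  isOpenMap _ _ := isOpen_discrete _

end Precomposition

theorem restriction_continuous_surjective_open_general
    {X E : Type*} [LinearOrder X] [TopologicalSpace X] [OrderClosedTopology X]
    [TopologicalSpace E] [AddCommGroup E] [IsTopologicalAddGroup E]
    {I J : Set X} (hJ : J.OrdConnected) (hJI : J ⊆ I)
    (hJclosed : IsClosed (Subtype.val ⁻¹' J : Set I)) :
    IsOpenQuotientMap (fun u : C(I, E) => u.comp (ContinuousMap.inclusion hJI)) := by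
  rcases isEmpty_or_nonempty J with _ | ⟨⟨a, ha⟩⟩
  · exact isOpenQuotientMap_precomp_of_isEmpty _
  obtain ⟨r, hr⟩ := exists_retraction_of_ordConnected_of_isClosed
    (hJ.preimage_mono (Subtype.mono_coe I)) hJclosed ⟨⟨a, hJI ha⟩, ha⟩
  refine isOpenQuotientMap_precomp_of_leftInverse
    (r := ((ContinuousMap.mk (Subtype.val : I → X)).restrictPreimage J).comp r) fun x => ?_
  exact congrArg (fun y => (⟨y.1, y.2⟩ : J)) (hr ⟨⟨x, hJI x.2⟩, x.2⟩)

/-- Let `H` be a separable real Hilbert space, `I ⊆ ℝ` an interval, and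
`J ⊆ I` a subinterval which is closed in `I`.  Then the restriction map
`Π_J : C(I, H_w) → C(J, H_w)`, `(Π_J u) t = u t` for `t ∈ J`, is continuous, surjective,
and open. -/
theorem restriction_continuous_surjective_open
    {H : Type*} [NormedAddCommGroup H] [InnerProductSpace ℝ H] [CompleteSpace H]
    [TopologicalSpace.SeparableSpace H]
    (I J : Set ℝ) (hI : I.OrdConnected) (hJ : J.OrdConnected) (hJI : J ⊆ I)
    (hJclosed : IsClosed (Subtype.val ⁻¹' J : Set I)) :
    Continuous (fun u : C(I, WeakSpace ℝ H) =>
        u.comp (ContinuousMap.inclusion hJI)) ∧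
      Function.Surjective (fun u : C(I, WeakSpace ℝ H) =>
        u.comp (ContinuousMap.inclusion hJI)) ∧
      IsOpenMap (fun u : C(I, WeakSpace ℝ H) =>
        u.comp (ContinuousMap.inclusion hJI)) :=
  have h := restriction_continuous_surjective_open_general (E := WeakSpace ℝ H) hJ hJI hJclosed
  ⟨h.continuous, h.surjective, h.isOpenMap⟩
end
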